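/- Let d, k ≥ 1 and n ≥ 2. Then the canonical epimorphism Ψ : TM(ℤ^d,n,k) → TM_fix(ℤ^d,n,k) is an isomorphism of monoids, and it restricts to a group isomorphism from RTM(ℤ^d,n,k) onto RTM_fix(ℤ^d,n,k). -/

import Mathlib

/-!
A Turing machine in either model amounts to a self-map of the moving-tape configurations together
with the displacement of the head as a function of the configuration. Composition adds the
displacements along the orbit, so these pairs form a monoid of skew products. A moving-head machine
remembers both components, whereas the moving-tape machine forgets the displacement, and `Ψ` is this
forgetful map.

For `n ≥ 2` nothing is lost. The displacement is a continuous function of the configuration, and the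
new tape agrees with the old one, translated by the displacement, outside a finite set. Given
`u ≠ v`, the tapes whose translates by `u` and `v` differ at infinitely many cells are dense, and on
such a tape the new tape cannot come from both displacements `u` and `v`.
-/

open Function

/-- `ℤ^d`. -/
abbrev V (d : ℕ) : Type := Fin d → ℤ

/-- A head configuration is valid if it carries at most one head. -/
def headOk {d k : ℕ} (y : V d → Option (Fin k)) : Prop :=
  ∀ u v : V d, (y u).isSome → (y v).isSome → u = v

/-- The space `X_{n,k}`: a tape in `Σ^{ℤ^d}` together with at most one head
carrying a state in `Q = Fin k`. -/
abbrev X (d n k : ℕ) : Type :=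
  { c : (V d → Fin n) × (V d → Option (Fin k)) // headOk c.2 }

/-- `DefinedBy F F' f T` : `T` is the moving-head Turing machine defined by the
local rule `f`, reading the tape on the window `F`, writing on the window `F'`,
changing the state and moving the head. -/
def DefinedBy {d n k : ℕ} (F F' : Finset (V d))
    (f : (V d → Fin n) → Fin k → (V d → Fin n) × Fin k × V d)
    (T : X d n k → X d n k) : Prop :=
  -- `f` only depends on the restriction of the tape to `F`, and only the
  -- restriction of its tape output to `F'` matters:
  (∀ x x' q, (∀ v ∈ F, x v = x' v) →
      (∀ v ∈ F', (f x q).1 v = (f x' q).1 v) ∧ (f x q).2 = (f x' q).2) ∧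
  -- a configuration with no head is fixed:
  (∀ c : X d n k, (∀ v, c.val.2 v = none) → T c = c) ∧
  -- if the head is at `v` in state `q`, apply the local rule there:
  (∀ (c : X d n k) (v : V d) (q : Fin k), c.val.2 v = some q →
    (∀ t, (T c).val.1 t =
      if t - v ∈ F' then (f (fun u => c.val.1 (u + v)) q).1 (t - v) else c.val.1 t) ∧
    (∀ t, (T c).val.2 t =
      if t = v + (f (fun u => c.val.1 (u + v)) q).2.2
      then some (f (fun u => c.val.1 (u + v)) q).2.1 else none))

/-- A moving-head `(d,n,k)`-Turing machine. -/
def IsTM {d n k : ℕ} (T : X d n k → X d n k) : Prop :=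
  ∃ F F' f, DefinedBy F F' f T

/-- A reversible moving-head Turing machine: a Turing machine admitting a
Turing machine inverse. -/
def IsRTM {d n k : ℕ} (T : X d n k → X d n k) : Prop :=
  IsTM T ∧ ∃ S : X d n k → X d n k, IsTM S ∧ S ∘ T = id ∧ T ∘ S = id
/-- The configuration space `Σ^{ℤ^d} × Q` of the moving-tape model. -/
abbrev Cfg (d n k : ℕ) : Type := (V d → Fin n) × Fin k

/-- `TapeDefinedBy F F' f T` : `T` is the moving-tape Turing machine defined by the
local rule `f`: if `f(x|_F, q) = (p, q', u)` then `T(x,q) = (σ_u y, q')` where `y`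
agrees with `x` outside `F'` and equals `p` on `F'`. -/
def TapeDefinedBy {d n k : ℕ} (F F' : Finset (V d))
    (f : (V d → Fin n) → Fin k → (V d → Fin n) × Fin k × V d)
    (T : Cfg d n k → Cfg d n k) : Prop :=
  -- `f` only depends on the restriction of the tape to `F`, and only the
  -- restriction of its tape output to `F'` matters:
  (∀ x x' q, (∀ v ∈ F, x v = x' v) →
      (∀ v ∈ F', (f x q).1 v = (f x' q).1 v) ∧ (f x q).2 = (f x' q).2) ∧
  -- the machine equation:
  (∀ (x : V d → Fin n) (q : Fin k),
    (T (x, q)).2 = (f x q).2.1 ∧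
    ∀ t, (T (x, q)).1 t =
      if t - (f x q).2.2 ∈ F' then (f x q).1 (t - (f x q).2.2)
      else x (t - (f x q).2.2))

/-- A moving-tape `(d,n,k)`-Turing machine. -/
def IsTMfix {d n k : ℕ} (T : Cfg d n k → Cfg d n k) : Prop :=
  ∃ F F' f, TapeDefinedBy F F' f T


/-- The moving-head configuration with tape `x` and a head in state `q` at the origin. -/
def emb {d n k : ℕ} (x : V d → Fin n) (q : Fin k) : X d n k :=
  ⟨(x, fun t => if t = 0 then some q else none), by
    intro u w hu hw
    by_cases h1 : u = 0
    · by_cases h2 : w = 0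
      · rw [h1, h2]
      · simp [h2] at hw
    · simp [h1] at hu⟩

/-- `PsiRel T T'` : `T'` is the image of the moving-head machine `T` under the
canonical map `Ψ`: `Ψ(T)(x,q) = (σ_{-v}(x'), q')` where `T` applied to the
configuration with tape `x` and head in state `q` at the origin yields tape `x'`
and head in state `q'` at position `v`. -/
def PsiRel {d n k : ℕ} (T : X d n k → X d n k) (T' : Cfg d n k → Cfg d n k) : Prop :=
  ∀ (x : V d → Fin n) (q : Fin k) (v : V d) (q' : Fin k),
    (T (emb x q)).val.2 v = some q' →
    T' (x, q) = (fun t => (T (emb x q)).val.1 (t + v), q')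

/-- The monoid `TM(ℤ^d,n,k)` of moving-head Turing machines, as a submonoid of
`Function.End (X d n k)` (function composition). -/
def TMmon (d n k : ℕ) : Submonoid (Function.End (X d n k)) :=
  Submonoid.closure {T : Function.End (X d n k) | IsTM (T : X d n k → X d n k)}

/-- The monoid `TM_fix(ℤ^d,n,k)` of moving-tape Turing machines. -/
def TMfixmon (d n k : ℕ) : Submonoid (Function.End (Cfg d n k)) :=
  Submonoid.closure {T : Function.End (Cfg d n k) | IsTMfix (T : Cfg d n k → Cfg d n k)}

open Filter Topology

section Topology

variable {ι : Type*} {A : ι → Type*} [∀ i, TopologicalSpace (A i)]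

lemma continuous_of_dependsOn_finite [∀ i, DiscreteTopology (A i)] {β : Type*}
    [TopologicalSpace β] {f : (∀ i, A i) → β} {s : Set ι} (hs : s.Finite) (hf : DependsOn f s) :
    Continuous f := by
  refine continuous_iff_continuousAt.2 fun x => ?_
  have agree : ∀ᶠ y in 𝓝 x, ∀ i ∈ s, y i = x i := (eventually_all_finite hs).2 fun i _ =>
    (continuous_apply i).continuousAt.eventually_mem ((isOpen_discrete {x i}).mem_nhds rfl)
  exact continuousAt_const.congr (agree.mono fun y hy => hf fun i hi => (hy i hi).symm)

lemma dense_setOf_eventually_cofinite_eq (z : ∀ i, A i) :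
    Dense {y : ∀ i, A i | ∀ᶠ i in cofinite, y i = z i} := by
  classical
  intro x
  have tendsto_x : Tendsto (fun s : Finset ι => s.piecewise x z) atTop (𝓝 x) :=
    tendsto_pi_nhds.2 fun i => tendsto_const_nhds.congr' <|
      (eventually_ge_atTop {i}).mono fun s hs =>
        (s.piecewise_eq_of_mem x z (Finset.singleton_subset_iff.1 hs)).symm
  refine mem_closure_of_tendsto tendsto_x (.of_forall fun s => ?_)
  exact s.eventually_cofinite_notMem.mono fun i hi => s.piecewise_eq_of_notMem x z hi

end Topology

section Translates

/-- The tapes `x` on which translation by `u` can be told apart from translation by `v` at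
infinitely many cells, so that finitely many changes cannot hide the difference. -/
def separatingTapes {G : Type*} [Add G] (A : Type*) (u v : G) : Set (G → A) :=
  {x | ∃ᶠ t in cofinite, x (t + u) ≠ x (t + v)}

lemma dense_separatingTapes {G A : Type*} [Add G] [IsRightCancelAdd G] [TopologicalSpace A]
    {u v : G} (h : (separatingTapes A u v).Nonempty) : Dense (separatingTapes A u v) := by
  obtain ⟨z, hz⟩ := h
  refine (dense_setOf_eventually_cofinite_eq z).mono fun y (hy : ∀ᶠ t in cofinite, y t = z t) => ?_
  have translate (w : G) : ∀ᶠ t in cofinite, y (t + w) = z (t + w) :=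
    (add_left_injective w).tendsto_cofinite.eventually hy
  refine (hz.and_eventually ((translate u).and (translate v))).mono ?_
  rintro t ⟨hne, hu, hv⟩
  rwa [hu, hv]

lemma separatingTapes_nonempty {ι A : Type*} [Nontrivial A] {u v : ι → ℤ} (h : u ≠ v) :
    (separatingTapes A u v).Nonempty := by
  obtain ⟨a, b, hab⟩ := exists_pair_ne A
  obtain ⟨i, hi⟩ := ne_iff.1 h
  have : Nonempty ι := ⟨i⟩
  have hw : v i - u i ≠ 0 := sub_ne_zero.2 hi.symm
  -- The witness alternates between the two symbols along the direction `v - u`.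
  refine ⟨fun t => if Even (t i / (v i - u i)) then a else b, .of_forall fun t => ?_⟩
  have quotient_succ : (t + v) i / (v i - u i) = (t + u) i / (v i - u i) + 1 :=
    calc (t + v) i / (v i - u i) = ((t + u) i + (v i - u i)) / (v i - u i) := by
          simp only [Pi.add_apply, add_add_sub_cancel]
      _ = (t + u) i / (v i - u i) + 1 := by
          rw [Int.add_ediv_of_dvd_right dvd_rfl, Int.ediv_self hw]
  simp only [quotient_succ, Int.even_add_one]
  split_ifs <;> simp_all [hab.symm]

end Translates

/-- A self-map `base` of `α` together with a displacement `cocycle a : G` for every point `a`: the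
data of the skew product `(a, v) ↦ (base a, v + cocycle a)` on `α × G`. -/
@[ext]
structure SkewProduct (α G : Type*) where
  base : α → α
  cocycle : α → G

namespace SkewProduct

section Monoid

variable {α G : Type*} [AddMonoid G]

instance : Monoid (SkewProduct α G) where
  one := ⟨id, fun _ => 0⟩
  mul m₂ m₁ := ⟨m₂.base ∘ m₁.base, fun a => m₁.cocycle a + m₂.cocycle (m₁.base a)⟩
  mul_assoc _ _ _ := SkewProduct.ext rfl (funext fun _ => (add_assoc _ _ _).symm)
  one_mul _ := SkewProduct.ext rfl (funext fun _ => add_zero _)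
  mul_one _ := SkewProduct.ext rfl (funext fun _ => zero_add _)

/-- Forgetting the displacement. -/
def baseHom : SkewProduct α G →* Function.End α where
  toFun := base
  map_one' := rfl
  map_mul' _ _ := rfl

/-- The action of a skew product on `α × G`. -/
def toEnd : SkewProduct α G →* Function.End (α × G) where
  toFun m p := (m.base p.1, p.2 + m.cocycle p.1)
  map_one' := funext fun _ => Prod.ext rfl (add_zero _)
  map_mul' _ _ := funext fun _ => Prod.ext rfl (add_assoc _ _ _).symm

lemma toEnd_apply (m : SkewProduct α G) (a : α) (v : G) :
    toEnd m (a, v) = (m.base a, v + m.cocycle a) := rfl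

lemma toEnd_injective : Injective (toEnd : SkewProduct α G → Function.End (α × G)) := by
  intro m m' h
  have at_zero (a : α) : (m.base a, m.cocycle a) = (m'.base a, m'.cocycle a) := by
    simpa only [toEnd_apply, zero_add] using congrFun h (a, 0)
  exact SkewProduct.ext (funext fun a => congrArg Prod.fst (at_zero a))
    (funext fun a => congrArg Prod.snd (at_zero a))

end Monoid

section Finitary

variable {G A Q : Type*} [AddCommGroup G] [TopologicalSpace G]
  [ContinuousAdd G] [TopologicalSpace A] [TopologicalSpace Q]

variable (G A Q) in
/-- The continuous skew products over tapes with an internal state that, up to the translation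
recorded by the cocycle, modify only finitely many cells of each tape. -/
def finitary : Submonoid (SkewProduct ((G → A) × Q) G) where
  carrier := {m | Continuous m.base ∧ Continuous m.cocycle ∧
    ∀ c, ∀ᶠ t in cofinite, (m.base c).1 t = c.1 (t + m.cocycle c)}
  one_mem' := ⟨continuous_id, continuous_const, fun c => .of_forall fun t =>
    congrArg c.1 (add_zero t).symm⟩
  mul_mem' := by
    rintro m₂ m₁ ⟨base₂, cocycle₂, agree₂⟩ ⟨base₁, cocycle₁, agree₁⟩
    refine ⟨base₂.comp base₁, cocycle₁.add (cocycle₂.comp base₁), fun c => ?_⟩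
    have agree₁' := (add_left_injective (m₂.cocycle (m₁.base c))).tendsto_cofinite.eventually
      (agree₁ c)
    filter_upwards [agree₂ (m₁.base c), agree₁'] with t h₂ h₁
    calc ((m₂ * m₁).base c).1 t = (m₁.base c).1 (t + m₂.cocycle (m₁.base c)) := h₂
      _ = c.1 (t + (m₁.cocycle c + m₂.cocycle (m₁.base c))) := by
        rw [h₁, add_assoc, add_comm (m₂.cocycle _)]

lemma injOn_baseHom_finitary [DiscreteTopology G]
    (hGA : ∀ u v : G, u ≠ v → (separatingTapes A u v).Nonempty) :
    Set.InjOn (baseHom : SkewProduct ((G → A) × Q) G →* Function.End _) (finitary G A Q) := by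
  rintro m ⟨-, continuous_m, agree_m⟩ m' ⟨-, continuous_m', agree_m'⟩
    (base_eq : m.base = m'.base)
  refine SkewProduct.ext base_eq (funext fun ⟨x, q⟩ => ?_)
  by_contra hne
  set u := m.cocycle (x, q)
  set v := m'.cocycle (x, q)
  have isOpen_near : IsOpen {y : G → A | m.cocycle (y, q) = u ∧ m'.cocycle (y, q) = v} :=
    ((isOpen_discrete {u}).preimage (by fun_prop : Continuous fun y => m.cocycle (y, q))).inter
      ((isOpen_discrete {v}).preimage (by fun_prop : Continuous fun y => m'.cocycle (y, q)))
  obtain ⟨y, ⟨hu, hv⟩, hy⟩ := (dense_separatingTapes (hGA u v hne)).inter_open_nonempty _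
    isOpen_near ⟨x, rfl, rfl⟩
  refine hy ((agree_m (y, q)).mp ((agree_m' (y, q)).mono fun t h' h => not_not.2 ?_))
  calc y (t + u) = (m.base (y, q)).1 t := by rw [h, hu]
    _ = y (t + v) := by rw [base_eq, h', hv]

end Finitary

end SkewProduct

section MonoidHom

variable {M N : Type*} [Monoid M] [Monoid N] {f : M →* N} {P : Submonoid M}

/-- The isomorphism from a submonoid to its image under a homomorphism injective on it. -/
noncomputable def mulEquivMapOfInjOn (hf : Set.InjOn f P) : P ≃* P.map f :=
  .ofBijective (f.submonoidMap P)
    ⟨fun a b h => Subtype.ext (hf a.2 b.2 (congrArg Subtype.val h)), f.submonoidMap_surjective P⟩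

lemma exists_inverse_mem_image_iff (hf : Set.InjOn f P) {s : Set M} (hs : s ⊆ P) {m : M}
    (hm : m ∈ P) :
    (∃ b ∈ f '' s, b * f m = 1 ∧ f m * b = 1) ↔ ∃ a ∈ s, a * m = 1 ∧ m * a = 1 := by
  rw [Set.exists_mem_image]
  refine exists_congr fun a => and_congr_right fun ha => ?_
  rw [← map_mul, ← map_mul, ← map_one f, hf.eq_iff (mul_mem (hs ha) hm) (one_mem P),
    hf.eq_iff (mul_mem hm (hs ha)) (one_mem P)]

end MonoidHom

section EndExtend

variable {α β : Type*}

/-- Extension of self-maps along an injection, by the identity outside its range. -/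
noncomputable def endExtend (i : α → β) (hi : Injective i) : Function.End α →* Function.End β where
  toFun g := extend i (i ∘ g) id
  map_one' := funext fun b => by
    by_cases hb : ∃ a, i a = b
    · obtain ⟨a, rfl⟩ := hb
      exact hi.extend_apply _ _ a
    · exact extend_apply' _ _ b hb
  map_mul' g₂ g₁ := funext fun b => by
    change extend i _ id b = extend i (i ∘ g₂) id (extend i (i ∘ g₁) id b)
    by_cases hb : ∃ a, i a = b
    · obtain ⟨a, rfl⟩ := hb
      rw [hi.extend_apply, hi.extend_apply]
      exact (hi.extend_apply (i ∘ g₂) id (g₁ a)).symm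
    · simp only [extend_apply' _ _ b hb, id_eq]

lemma endExtend_apply {i : α → β} (hi : Injective i) (g : Function.End α) (a : α) :
    endExtend i hi g (i a) = i (g a) :=
  hi.extend_apply _ _ a

lemma endExtend_apply_of_notMem_range {i : α → β} (hi : Injective i) (g : Function.End α) {b : β}
    (hb : b ∉ Set.range i) : endExtend i hi g b = b :=
  extend_apply' _ _ b hb

lemma endExtend_injective {i : α → β} (hi : Injective i) : Injective (endExtend i hi) := by
  intro g g' h
  funext a
  apply hi
  rw [← endExtend_apply hi, ← endExtend_apply hi, h]

end EndExtend

section Machines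

variable {d n k : ℕ}

/-- The moving-head configuration obtained from `((x, q), v)` by moving the moving-tape
configuration `(x, q)` to head position `v`. -/
def headed (p : Cfg d n k × V d) : X d n k :=
  ⟨(fun t => p.1.1 (t - p.2), fun t => if t = p.2 then some p.1.2 else none), fun _ _ hu hv =>
    (Option.isSome_ite.1 hu).trans (Option.isSome_ite.1 hv).symm⟩

lemma eq_headed {c : X d n k} {v : V d} {q : Fin k} (h : c.val.2 v = some q) :
    c = headed ((fun t => c.val.1 (t + v), q), v) := by
  refine Subtype.ext (Prod.ext (funext fun t => ?_) (funext fun t => ?_))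
  · simp only [headed, sub_add_cancel]
  · by_cases ht : t = v
    · simp only [headed, ht, h, if_true]
    · simp only [headed, if_neg ht]
      by_contra hne
      exact ht (c.2 t v (Option.isSome_iff_ne_none.2 hne) (h ▸ rfl))

lemma headed_injective : Injective (headed : Cfg d n k × V d → X d n k) := by
  rintro ⟨⟨x, q⟩, v⟩ ⟨⟨y, r⟩, w⟩ h
  have tape_eq (t : V d) : x (t - v) = y (t - w) := congrFun (congrArg (fun c => c.val.1) h) t
  have head_eq : some q = if v = w then some r else none :=
    (if_pos rfl).symm.trans (congrFun (congrArg (fun c => c.val.2) h) v)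
  obtain ⟨rfl, state_eq⟩ := Option.ite_none_right_eq_some.1 head_eq.symm
  obtain rfl : x = y := funext fun t => by
    simpa only [add_sub_cancel_right] using tape_eq (t + v)
  rw [Option.some.inj state_eq]

lemma emb_eq_headed (x : V d → Fin n) (q : Fin k) : emb x q = headed ((x, q), 0) := by
  simp only [emb, headed, sub_zero]

/-- The moving-head machine of a skew product: it acts on the configurations with a head and fixes
the others. -/
noncomputable def movingHeadHom (d n k : ℕ) :
    SkewProduct (Cfg d n k) (V d) →* Function.End (X d n k) :=
  (endExtend headed headed_injective).comp SkewProduct.toEnd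

lemma movingHeadHom_injective : Injective (movingHeadHom d n k) :=
  (endExtend_injective headed_injective).comp SkewProduct.toEnd_injective

lemma movingHeadHom_headed (m : SkewProduct (Cfg d n k) (V d)) (c : Cfg d n k) (v : V d) :
    movingHeadHom d n k m (headed (c, v)) = headed (m.base c, v + m.cocycle c) :=
  endExtend_apply headed_injective _ _

lemma movingHeadHom_of_forall_none (m : SkewProduct (Cfg d n k) (V d)) {c : X d n k}
    (hc : ∀ v, c.val.2 v = none) : movingHeadHom d n k m c = c :=
  endExtend_apply_of_notMem_range headed_injective _ <| by
    rintro ⟨p, rfl⟩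
    simpa only [headed, if_true, reduceCtorEq] using hc p.2

/-- The moving-tape machine of a skew product. -/
abbrev movingTapeHom (d n k : ℕ) :
    SkewProduct (Cfg d n k) (V d) →* Function.End (Cfg d n k) :=
  SkewProduct.baseHom

lemma psiRel_movingHeadHom_movingTapeHom (m : SkewProduct (Cfg d n k) (V d)) :
    PsiRel (movingHeadHom d n k m) (movingTapeHom d n k m) := by
  intro x q v q' hv
  rw [emb_eq_headed, movingHeadHom_headed, zero_add] at hv ⊢
  obtain ⟨rfl, hq⟩ := Option.ite_none_right_eq_some.1 hv
  refine Prod.ext (funext fun t => ?_) (Option.some.inj hq)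
  simp only [headed, add_sub_cancel_right]
  rfl

/-- A local rule, reading a whole tape and a state, and returning the symbols to write, the new
state and the move. -/
abbrev Rule (d n k : ℕ) : Type :=
  (V d → Fin n) → Fin k → (V d → Fin n) × Fin k × V d

/-- The rule `f` reads only the window `F`, as far as its output on `F'`, the new state and the move
are concerned. -/
def IsLocalRule (F F' : Finset (V d)) (f : Rule d n k) : Prop :=
  ∀ x x' q, (∀ v ∈ F, x v = x' v) →
    (∀ v ∈ F', (f x q).1 v = (f x' q).1 v) ∧ (f x q).2 = (f x' q).2

namespace Rule

/-- The tape after applying the rule `f` with write window `F'`, before any translation. -/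
def write (F' : Finset (V d)) (f : Rule d n k) (c : Cfg d n k) : V d → Fin n :=
  fun t => if t ∈ F' then (f c.1 c.2).1 t else c.1 t

/-- One step of the rule `f` with write window `F'`, the displacement being the move of the head. -/
def skewProduct (F' : Finset (V d)) (f : Rule d n k) : SkewProduct (Cfg d n k) (V d) where
  base c := (fun t => f.write F' c (t + (f c.1 c.2).2.2), (f c.1 c.2).2.1)
  cocycle c := (f c.1 c.2).2.2

/-- The rule with opposite moves. The moving-tape model translates the tape, not the head, by the
move, so the two models associate opposite displacements with a rule. -/
def reverseMove (f : Rule d n k) : Rule d n k :=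
  fun x q => ((f x q).1, (f x q).2.1, -(f x q).2.2)

lemma reverseMove_reverseMove (f : Rule d n k) : f.reverseMove.reverseMove = f := by
  funext x q
  simp only [reverseMove, neg_neg]

end Rule

variable {F F' : Finset (V d)} {f : Rule d n k}

namespace IsLocalRule

lemma reverseMove (hf : IsLocalRule F F' f) : IsLocalRule F F' f.reverseMove := by
  intro x x' q hx
  obtain ⟨symbols_eq, move_eq⟩ := hf x x' q hx
  exact ⟨symbols_eq, by simp only [Rule.reverseMove, move_eq]⟩

lemma continuous_snd (hf : IsLocalRule F F' f) :
    Continuous fun c : Cfg d n k => (f c.1 c.2).2 :=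
  continuous_prod_of_discrete_right.2 fun q =>
    continuous_of_dependsOn_finite F.finite_toSet fun x y hxy => (hf x y q hxy).2

lemma continuous_write (hf : IsLocalRule F F' f) : Continuous (f.write F') := by
  refine continuous_pi fun t => continuous_prod_of_discrete_right.2 fun q => ?_
  unfold Rule.write
  split_ifs with ht
  · exact continuous_of_dependsOn_finite F.finite_toSet fun x y hxy => (hf x y q hxy).1 t ht
  · exact continuous_apply t

lemma skewProduct_mem_finitary (hf : IsLocalRule F F' f) :
    f.skewProduct F' ∈ SkewProduct.finitary (V d) (Fin n) (Fin k) := by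
  have continuous_move : Continuous fun c : Cfg d n k => (f c.1 c.2).2.2 := hf.continuous_snd.snd
  have continuous_eval : Continuous fun p : (V d → Fin n) × V d => p.1 p.2 :=
    continuous_prod_of_discrete_right.2 continuous_apply
  refine ⟨(continuous_pi fun t => ?_).prodMk hf.continuous_snd.fst, continuous_move, fun c => ?_⟩
  · exact continuous_eval.comp (hf.continuous_write.prodMk (continuous_const.add continuous_move))
  · have := (add_left_injective (f c.1 c.2).2.2).tendsto_cofinite.eventually
      F'.eventually_cofinite_notMem
    exact this.mono fun t ht => if_neg ht

end IsLocalRule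

lemma movingHeadHom_skewProduct_apply (F' : Finset (V d)) (f : Rule d n k) {c : X d n k} {v : V d}
    {q : Fin k} (h : c.val.2 v = some q) :
    (∀ t, (movingHeadHom d n k (f.skewProduct F') c).val.1 t =
      if t - v ∈ F' then (f (fun u => c.val.1 (u + v)) q).1 (t - v) else c.val.1 t) ∧
    (∀ t, (movingHeadHom d n k (f.skewProduct F') c).val.2 t =
      if t = v + (f (fun u => c.val.1 (u + v)) q).2.2
      then some (f (fun u => c.val.1 (u + v)) q).2.1 else none) := by
  have act := movingHeadHom_headed (f.skewProduct F') (fun t => c.val.1 (t + v), q) v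
  rw [← eq_headed h] at act
  rw [act]
  refine ⟨fun t => ?_, fun t => rfl⟩
  simp only [headed, Rule.skewProduct, Rule.write, ← sub_sub, sub_add_cancel]

lemma definedBy_iff {T : X d n k → X d n k} :
    DefinedBy F F' f T ↔ IsLocalRule F F' f ∧ movingHeadHom d n k (f.skewProduct F') = T := by
  refine and_congr_right fun _ => ⟨fun ⟨fixed, act⟩ => funext fun c => ?_, ?_⟩
  · by_cases hc : ∀ v, c.val.2 v = none
    · rw [fixed c hc, movingHeadHom_of_forall_none _ hc]
    · obtain ⟨v, hv⟩ := not_forall.1 hc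
      obtain ⟨q, hq⟩ := Option.ne_none_iff_exists'.1 hv
      obtain ⟨tape_eq, head_eq⟩ := act c v q hq
      obtain ⟨tape_eq', head_eq'⟩ := movingHeadHom_skewProduct_apply F' f hq
      exact Subtype.ext (Prod.ext (funext fun t => (tape_eq' t).trans (tape_eq t).symm)
        (funext fun t => (head_eq' t).trans (head_eq t).symm))
  · rintro rfl
    exact ⟨fun c => movingHeadHom_of_forall_none _,
      fun c v q => movingHeadHom_skewProduct_apply F' f⟩

lemma tapeDefinedBy_iff {T : Cfg d n k → Cfg d n k} :
    TapeDefinedBy F F' f T ↔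
      IsLocalRule F F' f ∧ movingTapeHom d n k (f.reverseMove.skewProduct F') = T := by
  have act (c : Cfg d n k) : movingTapeHom d n k (f.reverseMove.skewProduct F') c =
      (fun t => if t - (f c.1 c.2).2.2 ∈ F' then (f c.1 c.2).1 (t - (f c.1 c.2).2.2)
        else c.1 (t - (f c.1 c.2).2.2), (f c.1 c.2).2.1) := by
    simp only [sub_eq_add_neg]
    rfl
  refine and_congr_right fun _ => ⟨fun h => funext fun c => ?_, ?_⟩
  · obtain ⟨state_eq, tape_eq⟩ := h c.1 c.2
    exact (act c).trans (Prod.ext (funext fun t => (tape_eq t).symm) state_eq.symm)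
  · rintro rfl x q
    rw [act]
    exact ⟨rfl, fun t => rfl⟩

/-- The skew products of the one-step machines. -/
def localSkewProducts (d n k : ℕ) : Set (SkewProduct (Cfg d n k) (V d)) :=
  {m | ∃ F F', ∃ f : Rule d n k, IsLocalRule F F' f ∧ f.skewProduct F' = m}

lemma isTM_iff {T : X d n k → X d n k} :
    IsTM T ↔ T ∈ movingHeadHom d n k '' localSkewProducts d n k := by
  constructor
  · rintro ⟨F, F', f, h⟩
    obtain ⟨hf, rfl⟩ := definedBy_iff.1 h
    exact ⟨_, ⟨F, F', f, hf, rfl⟩, rfl⟩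
  · rintro ⟨_, ⟨F, F', f, hf, rfl⟩, rfl⟩
    exact ⟨F, F', f, definedBy_iff.2 ⟨hf, rfl⟩⟩

lemma isTMfix_iff {T : Cfg d n k → Cfg d n k} :
    IsTMfix T ↔ T ∈ movingTapeHom d n k '' localSkewProducts d n k := by
  constructor
  · rintro ⟨F, F', f, h⟩
    obtain ⟨hf, rfl⟩ := tapeDefinedBy_iff.1 h
    exact ⟨_, ⟨F, F', _, hf.reverseMove, rfl⟩, rfl⟩
  · rintro ⟨_, ⟨F, F', f, hf, rfl⟩, rfl⟩
    exact ⟨F, F', _, tapeDefinedBy_iff.2 ⟨hf.reverseMove, by rw [f.reverseMove_reverseMove]⟩⟩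

/-- The common source of `TM(ℤ^d,n,k)` and `TM_fix(ℤ^d,n,k)`: machines as self-maps with
displacement. -/
def machineMonoid (d n k : ℕ) : Submonoid (SkewProduct (Cfg d n k) (V d)) :=
  Submonoid.closure (localSkewProducts d n k)

lemma map_movingHeadHom_machineMonoid :
    (machineMonoid d n k).map (movingHeadHom d n k) = TMmon d n k := by
  rw [machineMonoid, MonoidHom.map_mclosure]
  exact congrArg Submonoid.closure (Set.ext fun _ => isTM_iff.symm)

lemma map_movingTapeHom_machineMonoid :
    (machineMonoid d n k).map (movingTapeHom d n k) = TMfixmon d n k := by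
  rw [machineMonoid, MonoidHom.map_mclosure]
  exact congrArg Submonoid.closure (Set.ext fun _ => isTMfix_iff.symm)

lemma injOn_movingTapeHom_machineMonoid [Nontrivial (Fin n)] :
    Set.InjOn (movingTapeHom d n k) (machineMonoid d n k) := by
  have le_finitary : machineMonoid d n k ≤ SkewProduct.finitary _ _ _ :=
    Submonoid.closure_le.2 fun _ ⟨_, _, _, hf, h⟩ => h ▸ hf.skewProduct_mem_finitary
  exact (SkewProduct.injOn_baseHom_finitary fun _ _ => separatingTapes_nonempty).mono le_finitary

/-- Machines with displacement are the moving-head machines. -/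
noncomputable def movingHeadEquiv (d n k : ℕ) : machineMonoid d n k ≃* TMmon d n k :=
  (mulEquivMapOfInjOn movingHeadHom_injective.injOn).trans
    (MulEquiv.submonoidCongr map_movingHeadHom_machineMonoid)

/-- Machines with displacement are the moving-tape machines, provided the displacement can be
recovered. -/
noncomputable def movingTapeEquiv (d n k : ℕ) [Nontrivial (Fin n)] :
    machineMonoid d n k ≃* TMfixmon d n k :=
  (mulEquivMapOfInjOn injOn_movingTapeHom_machineMonoid).trans
    (MulEquiv.submonoidCongr map_movingTapeHom_machineMonoid)

lemma exists_isTM_inverse_iff (m : machineMonoid d n k) :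
    (∃ S : X d n k → X d n k, IsTM S ∧ S ∘ (movingHeadHom d n k m : X d n k → X d n k) = id ∧
        (movingHeadHom d n k m : X d n k → X d n k) ∘ S = id) ↔
      ∃ a ∈ localSkewProducts d n k, a * m = 1 ∧ m * a = 1 := by
  simp only [isTM_iff]
  exact exists_inverse_mem_image_iff movingHeadHom_injective.injOn Submonoid.subset_closure m.2

lemma exists_isTMfix_inverse_iff [Nontrivial (Fin n)] (m : machineMonoid d n k) :
    (∃ S : Cfg d n k → Cfg d n k, IsTMfix S ∧
        S ∘ (movingTapeHom d n k m : Cfg d n k → Cfg d n k) = id ∧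
        (movingTapeHom d n k m : Cfg d n k → Cfg d n k) ∘ S = id) ↔
      ∃ a ∈ localSkewProducts d n k, a * m = 1 ∧ m * a = 1 := by
  simp only [isTMfix_iff]
  exact exists_inverse_mem_image_iff injOn_movingTapeHom_machineMonoid
    Submonoid.subset_closure m.2

end Machines

/-- For `n ≥ 2` the canonical map `Ψ` is an isomorphism of monoids
`TM(ℤ^d,n,k) ≅ TM_fix(ℤ^d,n,k)`, which restricts to a group isomorphism
`RTM(ℤ^d,n,k) ≅ RTM_fix(ℤ^d,n,k)` (reversible machines correspond to reversible
machines). -/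
theorem psi_monoid_iso (d n k : ℕ) (hd : 1 ≤ d) (hn : 2 ≤ n) (hk : 1 ≤ k) :
    ∃ e : TMmon d n k ≃* TMfixmon d n k,
      (∀ T : TMmon d n k,
        PsiRel (T.val : X d n k → X d n k) ((e T).val : Cfg d n k → Cfg d n k)) ∧
      (∀ T : TMmon d n k,
        (∃ S : X d n k → X d n k, IsTM S ∧
            S ∘ (T.val : X d n k → X d n k) = id ∧ (T.val : X d n k → X d n k) ∘ S = id) ↔
        (∃ S' : Cfg d n k → Cfg d n k, IsTMfix S' ∧
            S' ∘ ((e T).val : Cfg d n k → Cfg d n k) = id ∧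
            ((e T).val : Cfg d n k → Cfg d n k) ∘ S' = id)) := by
  have := Fin.nontrivial_iff_two_le.2 hn
  refine ⟨(movingHeadEquiv d n k).symm.trans (movingTapeEquiv d n k), fun T => ?_, fun T => ?_⟩
  all_goals
    obtain ⟨m, rfl⟩ := (movingHeadEquiv d n k).surjective T
    rw [MulEquiv.trans_apply, MulEquiv.symm_apply_apply]
  · exact psiRel_movingHeadHom_movingTapeHom m.val
  · exact (exists_isTM_inverse_iff m).trans (exists_isTMfix_inverse_iff m).symm
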